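/- arXiv:1006.0027 — 2 statements merged into one kernel-verified Lean document; each statement's English description precedes it below -/
import Mathlib

section
/- For every n ≥ 0, every f ∈ L_{n+1} can be written in exactly one way as a finite sum f = Σ_{ℓ ≥ 0} g_ℓ · z_{n+1}^ℓ + Σ_{i=1}^{n} Σ_{k < 0} g_{i,k} · (z_{n+1} − z_i)^k, where the coefficients g_ℓ and g_{i,k} lie in L_n (they are local functions in z_1,…,z_n only) and all but finitely many of them are zero. -/
open MvPolynomial

/-- The field `ℂ(z_1,…,z_n)` of rational functions in `n` variables. -/
abbrev RatField (n : ℕ) : Type := FractionRing (MvPolynomial (Fin n) ℂ)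

/-- The variable `z_i`, viewed inside the rational function field. -/
noncomputable def Zvar (n : ℕ) (i : Fin n) : RatField n :=
  algebraMap (MvPolynomial (Fin n) ℂ) (RatField n) (X i)

/-- `L_{n+1}`: the ℂ-subalgebra of `ℂ(z_1,…,z_{n+1})` generated by the variables
and the inverses of their differences (local functions in `n+1` variables). -/
noncomputable def LocalFn (n : ℕ) : Subalgebra ℂ (RatField n) :=
  Algebra.adjoin ℂ
    (Set.range (Zvar n) ∪ {x | ∃ i j : Fin n, i ≠ j ∧ x = (Zvar n i - Zvar n j)⁻¹})

/-- `L_n` viewed inside `ℂ(z_1,…,z_{n+1})`: the ℂ-subalgebra generated by the first `n`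
variables `z_1,…,z_n` and the inverses of their differences; its elements are the local
functions in `z_1,…,z_n` only. -/
noncomputable def LocalFnLower (n : ℕ) : Subalgebra ℂ (RatField (n + 1)) :=
  Algebra.adjoin ℂ
    ((Set.range fun i : Fin n => Zvar (n + 1) i.castSucc) ∪
      {x | ∃ i j : Fin n, i ≠ j ∧
        x = (Zvar (n + 1) i.castSucc - Zvar (n + 1) j.castSucc)⁻¹})


/-- The spanning family: powers of `t` and negative powers of `t - a i`. -/
noncomputable def pfFamily {K : Type*} [Field K] {n : ℕ} (t : K) (a : Fin n → K) :
    ℕ ⊕ (Fin n × ℕ) → K :=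
  Sum.elim (fun l => t ^ l) (fun p => ((t - a p.1)⁻¹) ^ (p.2 + 1))

theorem finsupp_sum_split {α β M N : Type*} [Zero M] [AddCommMonoid N]
    (c : α ⊕ β →₀ M) (F : α ⊕ β → M → N) (hF : ∀ s, F s 0 = 0) :
    c.sum F = ((Finsupp.sumFinsuppEquivProdFinsupp c).1.sum fun x g => F (Sum.inl x) g) +
      (Finsupp.sumFinsuppEquivProdFinsupp c).2.sum fun y g => F (Sum.inr y) g := by
  classical
  rw [Finsupp.sum_of_support_subset (s := (Finsupp.sumFinsuppEquivProdFinsupp c).1.support.disjSum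
    (Finsupp.sumFinsuppEquivProdFinsupp c).2.support) c ?_ F (fun s _ => hF s)]
  · rw [Finset.sum_disjSum]
    rfl
  · rintro (x | y) h <;> simpa using h

theorem finsupp_lift {α K : Type*} [Field K] [Algebra ℂ K] (A : Subalgebra ℂ K)
    (g : α →₀ K) (hg : ∀ x, g x ∈ A) :
    ∃ c : α →₀ A, c.mapRange (fun x : A => (x : K)) rfl = g :=
  ⟨⟨g.support, fun x => ⟨g x, hg x⟩, fun x => by simp [Subtype.ext_iff]⟩, by ext x; rfl⟩

theorem pf_unique {K : Type*} [Field K] [Algebra ℂ K] (A : Subalgebra ℂ K) {n : ℕ}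
    (t : K) (a : Fin n → K) (ha : ∀ i, a i ∈ A)
    (hinv : ∀ i j, i ≠ j → (a i - a j)⁻¹ ∈ A) (hne : ∀ i j, i ≠ j → a i - a j ≠ 0)
    (ht : Transcendental A t) :
    LinearIndependent A (pfFamily t a) := by
  classical
  rw [linearIndependent_iff]
  intro c hc
  let _ : Algebra (Polynomial A) K := (Polynomial.aeval (R := A) t).toRingHom.toAlgebra
  have hmap : ∀ p : Polynomial A, algebraMap (Polynomial A) K p = Polynomial.aeval t p :=
    fun p => rfl
  have hinj : Function.Injective (algebraMap (Polynomial A) K) :=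
    transcendental_iff_injective.mp ht
  have : FaithfulSMul (Polynomial A) K := (faithfulSMul_iff_algebraMap_injective _ _).mpr hinj
  let b : Fin n → A := fun i => ⟨a i, ha i⟩
  have htne : ∀ i, t - a i ≠ 0 := by
    intro i h
    apply Polynomial.X_sub_C_ne_zero (b i)
    apply hinj
    rw [hmap, map_zero]
    simpa [b] using h
  obtain ⟨N, hN⟩ : ∃ N : ℕ, ∀ p : Fin n × ℕ, c (Sum.inr p) ≠ 0 → p.2 < N := by
    refine ⟨(c.support.sup fun s => Sum.elim (fun _ => 0) (fun p => p.2) s) + 1, ?_⟩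
    intro p hp
    have := Finset.le_sup (f := fun s : ℕ ⊕ (Fin n × ℕ) => Sum.elim (fun _ => 0) (fun p => p.2) s)
      (Finsupp.mem_support_iff.mpr hp)
    simp only [Sum.elim_inr] at this
    omega
  let q : Polynomial A := (Finsupp.sumFinsuppEquivProdFinsupp c).1.sum
    fun l g => Polynomial.monomial l g
  have hq : algebraMap (Polynomial A) K q =
      (Finsupp.sumFinsuppEquivProdFinsupp c).1.sum fun l g => (g : K) * t ^ l := by
    rw [hmap]
    simp only [q, Finsupp.sum, map_sum, Polynomial.aeval_monomial]
    rfl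
  have key := Polynomial.quo_add_sum_rem_mul_pow_inverse_unique (R := A) (K := K) (s := Finset.univ)
    (g := fun i => Polynomial.X - Polynomial.C (b i)) (fun i _ => Polynomial.monic_X_sub_C _)
    (n := fun _ => N) (gi := fun i => (t - a i)⁻¹)
    (q₁ := q) (q₂ := 0) (r₁ := fun i j => Polynomial.C (c (Sum.inr (i, j.1))))
    (r₂ := fun _ _ => 0) ?_ ?_ ?_ ?_ ?_
  · obtain ⟨h1, h2⟩ := key
    ext s
    rcases s with l | ⟨i, m⟩
    · have : q.coeff l = c (Sum.inl l) := by
        simp only [q, Finsupp.sum, Polynomial.finsetSum_coeff, Polynomial.coeff_monomial]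
        rw [Finset.sum_ite_eq']
        simp
        exact fun h => h.symm
      rw [← this, h1]
      simp
    · by_cases hm : m < N
      · have := congrFun (h2 i (Finset.mem_univ _)) ⟨m, hm⟩
        simp only [Polynomial.C_eq_zero] at this
        simp [this]
      · by_contra h
        exact hm (hN (i, m) fun h' => h (by simp [h']))
  · intro i _ j _ hij
    have hu : IsUnit (b i - b j) := by
      refine IsUnit.of_mul_eq_one ⟨_, hinv i j hij⟩ ?_
      ext
      simpa [b] using mul_inv_cancel₀ (hne i j hij)
    exact Polynomial.isCoprime_X_sub_C_of_isUnit_sub hu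
  · intro i _
    rw [hmap]
    simpa [b] using inv_mul_cancel₀ (htne i)
  · intro i _ j
    rw [Polynomial.degree_X_sub_C]
    exact lt_of_le_of_lt Polynomial.degree_C_le (by norm_num)
  · intro i _ j
    rw [Polynomial.degree_X_sub_C]
    simp
  · rw [hq]
    simp only [map_zero, zero_mul, Finset.sum_const_zero, add_zero]
    rw [← hc, Finsupp.linearCombination_apply]
    have hs : (c.sum fun i g => g • pfFamily t a i) =
        ((Finsupp.sumFinsuppEquivProdFinsupp c).1.sum fun l g => (g : K) * t ^ l) +
        ((Finsupp.sumFinsuppEquivProdFinsupp c).2.sum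
          fun p g => (g : K) * ((t - a p.1)⁻¹) ^ (p.2 + 1)) :=
      finsupp_sum_split c _ (fun s => zero_smul _ _)
    rw [hs]
    congr 1
    rw [Finsupp.sum_of_support_subset (s := Finset.univ ×ˢ Finset.range N), Finset.sum_product]
    · refine Finset.sum_congr rfl fun i _ => ?_
      rw [Finset.sum_range]
      refine Finset.sum_congr rfl fun j _ => ?_
      rw [hmap]
      simp
    · intro p hp
      simp at hp ⊢
      exact hN p hp
    · simp

theorem pf_exists {K : Type*} [Field K] [Algebra ℂ K] (A : Subalgebra ℂ K) {n : ℕ}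
    (t : K) (a : Fin n → K) (ha : ∀ i, a i ∈ A)
    (hinv : ∀ i j, i ≠ j → (a i - a j)⁻¹ ∈ A) (hne : ∀ i j, i ≠ j → a i - a j ≠ 0)
    (htne : ∀ i, t - a i ≠ 0) (S : Set K)
    (hS : ∀ x ∈ S, x ∈ A ∨ x = t ∨ (∃ i, x = (t - a i)⁻¹ ∨ x = -(t - a i)⁻¹)) (f : K)
    (hf : f ∈ Algebra.adjoin ℂ S) :
    f ∈ Submodule.span A (Set.range (pfFamily t a)) := by
  set M := Submodule.span A (Set.range (pfFamily t a)) with hM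
  have hA : ∀ x ∈ A, ∀ m ∈ M, x * m ∈ M := fun x hx m hm => M.smul_mem ⟨x, hx⟩ hm
  have hpow : ∀ l : ℕ, t ^ l ∈ M := fun l => Submodule.subset_span ⟨Sum.inl l, rfl⟩
  have hneg : ∀ i (m : ℕ), ((t - a i)⁻¹) ^ m ∈ M := by
    intro i m
    cases m with
    | zero => simpa using hpow 0
    | succ m => exact Submodule.subset_span ⟨Sum.inr (i, m), rfl⟩
  have hgen : ∀ x : K, (∀ s, x * pfFamily t a s ∈ M) → ∀ m ∈ M, x * m ∈ M := by
    intro x hx m hm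
    induction hm using Submodule.span_induction with
    | mem y hy => obtain ⟨s, rfl⟩ := hy; exact hx s
    | zero => simp
    | add y z _ _ hy hz => rw [mul_add]; exact M.add_mem hy hz
    | smul r y _ hy => rw [mul_smul_comm]; exact M.smul_mem r hy
  have hmulT : ∀ m ∈ M, t * m ∈ M := by
    apply hgen
    rintro (l | ⟨i, m⟩)
    · have : t * pfFamily t a (Sum.inl l) = t ^ (l + 1) := by simp [pfFamily, pow_succ']
      rw [this]; exact hpow _
    · have : t * pfFamily t a (Sum.inr (i, m)) =
          ((t - a i)⁻¹) ^ m + a i * ((t - a i)⁻¹) ^ (m + 1) := by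
        have := htne i
        simp only [pfFamily, Sum.elim_inr]
        rw [pow_succ]
        field_simp
        ring
      rw [this]
      exact M.add_mem (hneg _ _) (hA _ (ha i) _ (hneg _ _))
  have hmulI : ∀ i, ∀ m ∈ M, (t - a i)⁻¹ * m ∈ M := by
    intro i
    apply hgen
    rintro (l | ⟨j, m⟩)
    · simp only [pfFamily, Sum.elim_inl]
      induction l with
      | zero => simpa using hneg i 1
      | succ l ih =>
        have : (t - a i)⁻¹ * t ^ (l + 1) = t ^ l + a i * ((t - a i)⁻¹ * t ^ l) := by
          have := htne i
          field_simp
          ring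
        rw [this]
        exact M.add_mem (hpow _) (hA _ (ha i) _ ih)
    · by_cases hij : i = j
      · subst hij
        have : (t - a i)⁻¹ * pfFamily t a (Sum.inr (i, m)) = ((t - a i)⁻¹) ^ (m + 2) := by
          simp only [pfFamily, Sum.elim_inr]; ring
        rw [this]; exact hneg _ _
      · simp only [pfFamily, Sum.elim_inr]
        have step : ∀ k : ℕ, (t - a i)⁻¹ * ((t - a j)⁻¹) ^ (k + 1) =
            (a i - a j)⁻¹ * ((t - a i)⁻¹ * ((t - a j)⁻¹) ^ k - ((t - a j)⁻¹) ^ (k + 1)) := by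
          intro k
          have h1 := htne i
          have h2 := htne j
          have h3 := hne i j hij
          rw [pow_succ]
          field_simp
          ring
        have all : ∀ k : ℕ, (t - a i)⁻¹ * ((t - a j)⁻¹) ^ k ∈ M := by
          intro k
          induction k with
          | zero => simpa using hneg i 1
          | succ k ih =>
            rw [step]
            exact hA _ (hinv i j hij) _ (M.sub_mem ih (hneg _ _))
        exact all _
  have main : ∀ m ∈ M, f * m ∈ M := by
    induction hf using Algebra.adjoin_induction with
    | mem x hx =>
      rcases hS x hx with h | rfl | ⟨i, rfl | rfl⟩
      · exact hA x h
      · exact hmulT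
      · exact hmulI i
      · intro m hm
        rw [neg_mul]
        exact M.neg_mem (hmulI i m hm)
    | algebraMap r => exact hA _ (A.algebraMap_mem r)
    | add x y _ _ hx hy => intro m hm; rw [add_mul]; exact M.add_mem (hx m hm) (hy m hm)
    | mul x y _ _ hx hy => intro m hm; rw [mul_assoc]; exact hx _ (hy m hm)
  simpa using main _ (hpow 0)

theorem zvar_algInd (n : ℕ) : AlgebraicIndependent ℂ (Zvar n) :=
  (MvPolynomial.algebraicIndependent_X (Fin n) ℂ).map'
    (f := IsScalarTower.toAlgHom ℂ (MvPolynomial (Fin n) ℂ) (RatField n))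
    (IsFractionRing.injective (MvPolynomial (Fin n) ℂ) (RatField n))

theorem zvar_sub_ne (n : ℕ) (i j : Fin n) (h : i ≠ j) : Zvar n i - Zvar n j ≠ 0 :=
  sub_ne_zero.mpr fun e => h ((zvar_algInd n).injective e)

open scoped IntermediateField.algebraAdjoinAdjoin in
theorem zvar_transcendental (n : ℕ) :
    Transcendental (LocalFnLower n) (Zvar (n + 1) (Fin.last n)) := by
  have h0 := (zvar_algInd (n + 1)).transcendental_adjoin
    (s := Set.range (Fin.castSucc : Fin n → Fin (n + 1))) (i := Fin.last n)
    (by rintro ⟨i, hi⟩; exact (Fin.castSucc_lt_last i).ne hi)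
  set T := Zvar (n + 1) '' Set.range (Fin.castSucc : Fin n → Fin (n + 1)) with hT
  have h1 : Transcendental (IntermediateField.adjoin ℂ T) (Zvar (n + 1) (Fin.last n)) := by
    intro h
    exact h0 ((IsFractionRing.isAlgebraic_iff (Algebra.adjoin ℂ T)
      (IntermediateField.adjoin ℂ T) _).mpr h)
  have hle : LocalFnLower n ≤ (IntermediateField.adjoin ℂ T).toSubalgebra := by
    have hz : ∀ i : Fin n, Zvar (n + 1) i.castSucc ∈ IntermediateField.adjoin ℂ T :=
      fun i => IntermediateField.subset_adjoin _ _ ⟨_, ⟨i, rfl⟩, rfl⟩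
    refine Algebra.adjoin_le ?_
    rintro x (⟨i, rfl⟩ | ⟨i, j, -, rfl⟩)
    · exact hz i
    · exact (IntermediateField.adjoin ℂ T).inv_mem (sub_mem (hz i) (hz j))
  rintro ⟨p, hp, hp0⟩
  refine h1 ⟨p.map (Subalgebra.inclusion hle).toRingHom, ?_, ?_⟩
  · rwa [Ne, Polynomial.map_eq_zero_iff (Subalgebra.inclusion_injective hle)]
  · rw [Polynomial.aeval_def] at hp0 ⊢
    rw [Polynomial.eval₂_map]
    exact hp0

/-- every `f ∈ L_{n+1}` can be written in exactly one way as a finite sum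
`f = Σ_{ℓ ≥ 0} g_ℓ · z_{n+1}^ℓ + Σ_{i=1}^{n} Σ_{k<0} g_{i,k} · (z_{n+1} - z_i)^k`
with all coefficients `g_ℓ`, `g_{i,k}` local functions in `z_1,…,z_n` only, and all but
finitely many of them zero.  A negative exponent `k < 0` is recorded as `k = -(m+1)`
for `m : ℕ`, so the second family of coefficients is indexed by `Fin n × ℕ`. -/
theorem localFn_decomposition (n : ℕ) (f : RatField (n + 1)) (hf : f ∈ LocalFn (n + 1)) :
    ∃! gh : (ℕ →₀ RatField (n + 1)) × (Fin n × ℕ →₀ RatField (n + 1)),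
      (∀ ℓ : ℕ, gh.1 ℓ ∈ LocalFnLower n) ∧
      (∀ p : Fin n × ℕ, gh.2 p ∈ LocalFnLower n) ∧
      f = (gh.1.sum fun ℓ g => g * Zvar (n + 1) (Fin.last n) ^ ℓ) +
          gh.2.sum fun p g =>
            g * (Zvar (n + 1) (Fin.last n) - Zvar (n + 1) p.1.castSucc) ^ (-(p.2 + 1) : ℤ) := by
  have ha : ∀ i : Fin n, Zvar (n + 1) i.castSucc ∈ LocalFnLower n :=
    fun i => Algebra.subset_adjoin (Or.inl ⟨i, rfl⟩)
  have hinv : ∀ i j : Fin n, i ≠ j →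
      (Zvar (n + 1) i.castSucc - Zvar (n + 1) j.castSucc)⁻¹ ∈ LocalFnLower n :=
    fun i j h => Algebra.subset_adjoin (Or.inr ⟨i, j, h, rfl⟩)
  have hne : ∀ i j : Fin n, i ≠ j →
      Zvar (n + 1) i.castSucc - Zvar (n + 1) j.castSucc ≠ 0 :=
    fun i j h => zvar_sub_ne _ _ _ fun e => h (Fin.castSucc_injective n e)
  have htne : ∀ i : Fin n, Zvar (n + 1) (Fin.last n) - Zvar (n + 1) i.castSucc ≠ 0 :=
    fun i => zvar_sub_ne _ _ _ (Fin.castSucc_lt_last i).ne'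
  have hli := pf_unique (LocalFnLower n) (Zvar (n + 1) (Fin.last n))
    (fun i : Fin n => Zvar (n + 1) i.castSucc) ha hinv hne (zvar_transcendental n)
  have hex := pf_exists (LocalFnLower n) (Zvar (n + 1) (Fin.last n))
    (fun i : Fin n => Zvar (n + 1) i.castSucc) ha hinv hne htne _ ?_ f hf
  · have hsum : ∀ c : ℕ ⊕ (Fin n × ℕ) →₀ LocalFnLower n,
        (c.sum fun s g => g • pfFamily (Zvar (n + 1) (Fin.last n))
          (fun i : Fin n => Zvar (n + 1) i.castSucc) s) =
        (((Finsupp.sumFinsuppEquivProdFinsupp c).1.mapRange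
            (fun x : LocalFnLower n => (x : RatField (n + 1))) rfl).sum
          fun ℓ g => g * Zvar (n + 1) (Fin.last n) ^ ℓ) +
        ((Finsupp.sumFinsuppEquivProdFinsupp c).2.mapRange
            (fun x : LocalFnLower n => (x : RatField (n + 1))) rfl).sum fun p g =>
            g * (Zvar (n + 1) (Fin.last n) - Zvar (n + 1) p.1.castSucc) ^ (-(p.2 + 1) : ℤ) := by
      intro c
      rw [finsupp_sum_split c (fun s g => g • pfFamily (Zvar (n + 1) (Fin.last n))
          (fun i : Fin n => Zvar (n + 1) i.castSucc) s) (fun s => zero_smul _ _),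
        Finsupp.sum_mapRange_index (fun _ => zero_mul _),
        Finsupp.sum_mapRange_index (fun _ => zero_mul _)]
      congr 1
      refine Finset.sum_congr rfl fun p _ => ?_
      have : (-((p.2 : ℤ) + 1)) = -((p.2 + 1 : ℕ) : ℤ) := by push_cast; rfl
      beta_reduce
      rw [this, zpow_neg, zpow_natCast, ← inv_pow]
      rfl
    obtain ⟨c, hc⟩ := Finsupp.mem_span_range_iff_exists_finsupp.mp hex
    refine ⟨((Finsupp.sumFinsuppEquivProdFinsupp c).1.mapRange (fun x : LocalFnLower n => (x : RatField (n + 1))) rfl,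
      (Finsupp.sumFinsuppEquivProdFinsupp c).2.mapRange (fun x : LocalFnLower n => (x : RatField (n + 1))) rfl),
      ⟨fun l => ?_, fun p => ?_, ?_⟩, ?_⟩
    · exact ((Finsupp.sumFinsuppEquivProdFinsupp c).1 l).2
    · exact ((Finsupp.sumFinsuppEquivProdFinsupp c).2 p).2
    · rw [← hc]
      exact hsum c
    · rintro ⟨g, h⟩ ⟨hg, hh, hfe⟩
      obtain ⟨c₁, rfl⟩ := finsupp_lift _ g hg
      obtain ⟨c₂, rfl⟩ := finsupp_lift _ h hh
      have h2 := hsum (Finsupp.sumFinsuppEquivProdFinsupp.symm (c₁, c₂))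
      rw [Equiv.apply_symm_apply] at h2
      have h3 : Finsupp.sumFinsuppEquivProdFinsupp.symm (c₁, c₂) = c := by
        apply hli
        rw [Finsupp.linearCombination_apply, Finsupp.linearCombination_apply, h2, hc]
        exact hfe.symm
      rw [← h3, Equiv.apply_symm_apply]
  · rintro x (⟨i, rfl⟩ | ⟨i, j, hij, rfl⟩)
    · induction i using Fin.lastCases with
      | last => exact Or.inr (Or.inl rfl)
      | cast i => exact Or.inl (ha i)
    · induction i using Fin.lastCases with
      | last =>
        induction j using Fin.lastCases with
        | last => exact absurd rfl hij
        | cast j => exact Or.inr (Or.inr ⟨j, Or.inl rfl⟩)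
      | cast i =>
        induction j using Fin.lastCases with
        | last => exact Or.inr (Or.inr ⟨i, Or.inr (by rw [← inv_neg, neg_sub])⟩)
        | cast j => exact Or.inl (hinv i j fun e => hij (by rw [e]))
end

section
/- Let V be a uniform ℤ-graded vertex algebra. Then the bilinear operation (a, b) ↦ a(0)b descends to the quotient vector space Q = V / L_{−1}V (i.e. a(0)b + L_{−1}V depends only on the classes of a and b modulo L_{−1}V), and Q equipped with the induced bracket [ā, b̄] = \overline{a(0)b} is a complex Lie algebra: the induced bracket is bilinear, alternating, and satisfies the Jacobi identity. -/
/-- A uniform ℤ-graded vertex algebra: a ℤ-graded complex vector space with bilinear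
products `a(n)b`, a translation operator `L₋₁`, and a vacuum `1`, satisfying uniform
locality, translation covariance, the vacuum-field axiom and the creation axiom. -/
structure UniformVertexAlgebra (V : Type*) [AddCommGroup V] [Module ℂ V] where
  /-- The grading `V = ⊕_{n ∈ ℤ} V_n`. -/
  grading : ℤ → Submodule ℂ V
  /-- The grading is an (internal) direct sum decomposition of `V`. -/
  decomposition : DirectSum.Decomposition grading
  /-- The bilinear products: `mul n a b` is `a(n)b`. -/
  mul : ℤ → V →ₗ[ℂ] V →ₗ[ℂ] V
  /-- The translation operator `L₋₁`. -/
  T : V →ₗ[ℂ] V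
  /-- The vacuum vector `1`. -/
  vac : V
  vac_mem : vac ∈ grading 0
  /-- `a(n)` maps `V_m` into `V_{m−n+k−1}` whenever `a ∈ V_k`. -/
  mul_mem : ∀ (n k m : ℤ) (a c : V), a ∈ grading k → c ∈ grading m →
    mul n a c ∈ grading (m - n + k - 1)
  /-- `L₋₁` has degree one. -/
  T_mem : ∀ (n : ℤ) (a : V), a ∈ grading n → T a ∈ grading (n + 1)
  /-- Uniform locality, in coefficient form: `(z−t)^N [a(z), b(t)] = 0`. -/
  locality : ∀ a b : V, ∃ N : ℕ, ∀ (p q : ℤ) (c : V),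
    ∑ r ∈ Finset.range (N + 1),
      ((-1 : ℂ) ^ r * (N.choose r : ℂ)) •
        (mul (p + N - r) a (mul (q + r) b c) - mul (q + r) b (mul (p + N - r) a c)) = 0
  /-- Translation covariance: `[L₋₁, a(n)] = −n·a(n−1)`. -/
  translation : ∀ (n : ℤ) (a c : V),
    T (mul n a c) - mul n a (T c) = -(n • mul (n - 1) a c)
  T_vac : T vac = 0
  /-- Vacuum field: `1(n)c = c` if `n = −1` and `0` otherwise. -/
  vac_field : ∀ (n : ℤ) (c : V), mul n vac c = if n = -1 then c else 0
  /-- Creation: `a(n)1 = 0` for `n ≥ 0`. -/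
  creation : ∀ (n : ℤ) (a : V), 0 ≤ n → mul n a vac = 0
  /-- Creation: `a(−1)1 = a`. -/
  create_self : ∀ a : V, mul (-1) a vac = a

/-- The locality statement for a pair `(a,b)` with a specific witness `N`. -/
def UniformVertexAlgebra.LocalityAt {V : Type*} [AddCommGroup V] [Module ℂ V]
    (A : UniformVertexAlgebra V) (a b : V) (N : ℕ) : Prop :=
  ∀ (p q : ℤ) (c : V),
    ∑ r ∈ Finset.range (N + 1),
      ((-1 : ℂ) ^ r * (N.choose r : ℂ)) •
        (A.mul (p + N - r) a (A.mul (q + r) b c) -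
          A.mul (q + r) b (A.mul (p + N - r) a c)) = 0


namespace UVA

variable {W U : Type*} [AddCommGroup W] [Module ℂ W] [AddCommGroup U] [Module ℂ U]

/-- shift in the first variable -/
def s1 (W : Type*) [AddCommGroup W] [Module ℂ W] : Module.End ℂ (ℤ → ℤ → W) where
  toFun f := fun p q => f (p + 1) q
  map_add' _ _ := rfl
  map_smul' _ _ := rfl

/-- shift in the second variable -/
def s2 (W : Type*) [AddCommGroup W] [Module ℂ W] : Module.End ℂ (ℤ → ℤ → W) where
  toFun f := fun p q => f p (q + 1)
  map_add' _ _ := rfl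
  map_smul' _ _ := rfl

/-- multiplication by `z - t` -/
def dl (W : Type*) [AddCommGroup W] [Module ℂ W] : Module.End ℂ (ℤ → ℤ → W) := s1 W - s2 W

lemma dl_apply (f : ℤ → ℤ → W) (p q : ℤ) : dl W f p q = f (p + 1) q - f p (q + 1) := rfl

lemma s1_pow (n : ℕ) (f : ℤ → ℤ → W) (p q : ℤ) : (s1 W ^ n) f p q = f (p + n) q := by
  induction n generalizing f p q with
  | zero => simp
  | succ n ih =>
    rw [pow_succ, Module.End.mul_apply, ih]
    simp only [s1, LinearMap.coe_mk, AddHom.coe_mk]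
    push_cast; congr 1; ring

lemma s2_pow (n : ℕ) (f : ℤ → ℤ → W) (p q : ℤ) : (s2 W ^ n) f p q = f p (q + n) := by
  induction n generalizing f p q with
  | zero => simp
  | succ n ih =>
    rw [pow_succ, Module.End.mul_apply, ih]
    simp only [s2, LinearMap.coe_mk, AddHom.coe_mk]
    push_cast; congr 1; ring

lemma comm12 : Commute (s1 W) (s2 W) := rfl

lemma dl_pow (N : ℕ) (f : ℤ → ℤ → W) (p q : ℤ) :
    (dl W ^ N) f p q = ∑ r ∈ Finset.range (N + 1),
      ((-1 : ℂ) ^ r * (N.choose r : ℂ)) • f (p + N - r) (q + r) := by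
  have h : dl W = (-1 : ℂ) • s2 W + s1 W := by
    refine LinearMap.ext fun f => ?_
    funext p q
    change f (p + 1) q - f p (q + 1) = (-1 : ℂ) • f p (q + 1) + f (p + 1) q
    module
  have hc : Commute ((-1 : ℂ) • s2 W) (s1 W) := (comm12.symm).smul_left _
  rw [h, hc.add_pow, LinearMap.sum_apply, Finset.sum_apply, Finset.sum_apply]
  refine Finset.sum_congr rfl fun r hr => ?_
  have hr' : r ≤ N := by simpa [Nat.lt_succ_iff] using hr
  have e : ((-1 : ℂ) • s2 W) ^ r * s1 W ^ (N - r) * ((N.choose r : ℕ) : Module.End ℂ (ℤ → ℤ → W))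
      = ((-1 : ℂ) ^ r * (N.choose r : ℂ)) • (s2 W ^ r * s1 W ^ (N - r)) := by
    rw [smul_pow, smul_mul_assoc, smul_mul_assoc, mul_smul, ← nsmul_eq_mul', Nat.cast_smul_eq_nsmul]
  rw [e, LinearMap.smul_apply, Pi.smul_apply, Pi.smul_apply, Module.End.mul_apply, s2_pow, s1_pow]
  congr 2
  push_cast [hr']; ring

lemma dl_mono {N M : ℕ} (h : N ≤ M) {f : ℤ → ℤ → W} (hf : (dl W ^ N) f = 0) :
    (dl W ^ M) f = 0 := by
  obtain ⟨k, rfl⟩ := Nat.exists_eq_add_of_le' h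
  rw [pow_add, Module.End.mul_apply, hf, map_zero]

lemma dl_map (φ : W →ₗ[ℂ] U) (N : ℕ) (f : ℤ → ℤ → W) :
    (dl U ^ N) (fun p q => φ (f p q)) = fun p q => φ ((dl W ^ N) f p q) := by
  induction N generalizing f with
  | zero => rfl
  | succ n ih =>
    rw [pow_succ, pow_succ, Module.End.mul_apply, Module.End.mul_apply, ← ih]
    congr 1
    funext p q
    simp [dl_apply]

lemma dl_s1 (N : ℕ) (f : ℤ → ℤ → W) (k : ℤ) (hf : (dl W ^ N) f = 0) :
    (dl W ^ N) (fun p q => f (p + k) q) = 0 := by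
  funext p q
  have := congrFun (congrFun hf (p + k)) q
  rw [dl_pow] at this ⊢
  refine Eq.trans ?_ this
  refine Finset.sum_congr rfl fun r _ => ?_
  congr 2; ring

lemma dl_smul (N : ℕ) (f : ℤ → ℤ → W) (hf : (dl W ^ N) f = 0) :
    (dl W ^ (N + 1)) (fun (p q : ℤ) => (p : ℂ) • f p q) = 0 := by
  induction N generalizing f with
  | zero =>
    have : f = 0 := by simpa using hf
    subst this
    have e : (fun (p q : ℤ) => (p : ℂ) • (0 : ℤ → ℤ → W) p q) = (0 : ℤ → ℤ → W) := by
      funext p q; simp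
    rw [e, map_zero]
  | succ n ih =>
    have e : dl W (fun (p q : ℤ) => (p : ℂ) • f p q) =
        (fun (p q : ℤ) => (p : ℂ) • (dl W f) p q) + (fun (p q : ℤ) => f (p + 1) q) := by
      funext p q
      simp only [dl_apply, Pi.add_apply]
      push_cast
      module
    rw [pow_succ, Module.End.mul_apply, e, map_add, dl_s1 _ _ _ hf, add_zero]
    apply ih
    rwa [pow_succ, Module.End.mul_apply] at hf

lemma dl_edge (N : ℕ) (f : ℤ → ℤ → W) (hf : ∀ p q, 0 ≤ q → f p q = 0) (p : ℤ) :
    (dl W ^ N) f p (-1) = f (p + N) (-1) := by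
  induction N generalizing f p with
  | zero => simp
  | succ n ih =>
    rw [pow_succ, Module.End.mul_apply, ih]
    · rw [dl_apply, hf _ (-1 + 1) (by simp), sub_zero]
      push_cast; congr 1; ring
    · intro p q hq
      rw [dl_apply, hf _ _ hq, hf _ _ (by omega), sub_zero]

/-! three variables -/

/-- shift the first variable -/
def t1 (W : Type*) [AddCommGroup W] [Module ℂ W] : Module.End ℂ (ℤ → ℤ → ℤ → W) where
  toFun f := fun m n k => f (m + 1) n k
  map_add' _ _ := rfl
  map_smul' _ _ := rfl
/-- shift the second variable -/
def t2 (W : Type*) [AddCommGroup W] [Module ℂ W] : Module.End ℂ (ℤ → ℤ → ℤ → W) where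
  toFun f := fun m n k => f m (n + 1) k
  map_add' _ _ := rfl
  map_smul' _ _ := rfl
/-- shift the third variable -/
def t3 (W : Type*) [AddCommGroup W] [Module ℂ W] : Module.End ℂ (ℤ → ℤ → ℤ → W) where
  toFun f := fun m n k => f m n (k + 1)
  map_add' _ _ := rfl
  map_smul' _ _ := rfl

lemma t12 (N : ℕ) (f : ℤ → ℤ → ℤ → W) (m n k : ℤ) :
    ((t1 W - t2 W) ^ N) f m n k = (dl W ^ N) (fun m n => f m n k) m n := by
  induction N generalizing f with
  | zero => rfl
  | succ N ih => rw [pow_succ, pow_succ, Module.End.mul_apply, ih]; rfl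

lemma t13 (N : ℕ) (f : ℤ → ℤ → ℤ → W) (m n k : ℤ) :
    ((t1 W - t3 W) ^ N) f m n k = (dl W ^ N) (fun m k => f m n k) m k := by
  induction N generalizing f with
  | zero => rfl
  | succ N ih => rw [pow_succ, pow_succ, Module.End.mul_apply, ih]; rfl

lemma t23 (N : ℕ) (f : ℤ → ℤ → ℤ → W) (m n k : ℤ) :
    ((t2 W - t3 W) ^ N) f m n k = (dl W ^ N) (fun n k => f m n k) n k := by
  induction N generalizing f with
  | zero => rfl
  | succ N ih => rw [pow_succ, pow_succ, Module.End.mul_apply, ih]; rfl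

lemma pow_kill {R M : Type*} [Ring R] [AddCommGroup M] [Module R M] (u v : R) (h : Commute u v)
    (i j k : ℕ) (G G1 G2 : M) (hG : G = G1 - G2) (hu' : (-u) ^ i • G = 0)
    (h1 : (u + v) ^ k • G1 = 0) (h2 : v ^ j • G2 = 0) :
    (u + v) ^ (k + (i + j)) • G = 0 := by
  have hu : u ^ i • G = 0 := by
    have : u ^ i = (-1) ^ i * (-u) ^ i := by rw [← neg_pow, neg_neg]
    rw [this, mul_smul, hu', smul_zero]
  have hw1 : Commute (u + v) u := (Commute.refl u).add_left h.symm
  have hw2 : Commute (u + v) v := h.add_left (Commute.refl v)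
  rw [pow_add, h.add_pow (i + j), Finset.mul_sum, Finset.sum_smul]
  refine Finset.sum_eq_zero fun m hm => ?_
  rw [← Nat.cast_comm, ← mul_assoc, ← Nat.cast_comm, mul_assoc, mul_smul]
  suffices ((u + v) ^ k * (u ^ m * v ^ (i + j - m))) • G = 0 by rw [this, smul_zero]
  by_cases hmi : i ≤ m
  · obtain ⟨l, rfl⟩ := Nat.exists_eq_add_of_le' hmi
    rw [pow_add, mul_assoc, (h.pow_pow i _).eq, ← mul_assoc, ← mul_assoc, mul_smul, hu, smul_zero]
  · obtain ⟨l, hl⟩ := Nat.exists_eq_add_of_le' (show j ≤ i + j - m by omega)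
    rw [hG, smul_sub, hl]
    have e1 : ((u + v) ^ k * (u ^ m * v ^ (l + j))) • G1 = 0 := by
      rw [(((hw1.pow_pow k m).mul_right (hw2.pow_pow k (l + j)))).eq, mul_smul, h1, smul_zero]
    have e2 : ((u + v) ^ k * (u ^ m * v ^ (l + j))) • G2 = 0 := by
      rw [pow_add, ← mul_assoc, ← mul_assoc, mul_smul, h2, smul_zero]
    rw [e1, e2, sub_zero]

lemma dong (N₁₂ N₁₃ N₂₃ : ℕ) (G G1 G2 : ℤ → ℤ → ℤ → W)
    (hG : G = G1 - G2)
    (h12 : ∀ k, (dl W ^ N₁₂) (fun m n => G m n k) = 0)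
    (h23 : ∀ m, (dl W ^ N₂₃) (fun n k => G1 m n k) = 0)
    (h13 : ∀ n, (dl W ^ N₁₃) (fun m k => G2 m n k) = 0) (m : ℤ) :
    (dl W ^ (N₂₃ + (N₁₂ + N₁₃))) (fun n k => G m n k) = 0 := by
  have hc : Commute (t2 W - t1 W) (t1 W - t3 W) := by
    have c12 : Commute (t2 W) (t1 W) := rfl
    have c13 : Commute (t1 W) (t3 W) := rfl
    have c23 : Commute (t2 W) (t3 W) := rfl
    exact (c12.sub_right c23).sub_left ((Commute.refl _).sub_right c13)
  have key := pow_kill (M := ℤ → ℤ → ℤ → W) (t2 W - t1 W) (t1 W - t3 W) hc N₁₂ N₁₃ N₂₃ G G1 G2 hG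
    (by
      rw [neg_sub]
      funext m n k
      exact (t12 N₁₂ G m n k).trans (by rw [h12]; rfl))
    (by
      funext m n k
      rw [sub_add_sub_cancel]
      exact (t23 N₂₃ G1 m n k).trans (by rw [h23]; rfl))
    (by
      funext m n k
      exact (t13 N₁₃ G2 m n k).trans (by rw [h13]; rfl))
  rw [sub_add_sub_cancel] at key
  funext n k
  rw [← t23 _ G m n k]
  exact congrFun (congrFun (congrFun key m) n) k

/-! vertex algebras -/

variable {V : Type*} [AddCommGroup V] [Module ℂ V] (A : UniformVertexAlgebra V)

/-- modes as endomorphisms -/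
def md (a : V) (n : ℤ) : Module.End ℂ V := A.mul n a

lemma loc (a b : V) : ∃ N : ℕ, (dl (Module.End ℂ V) ^ N)
    (fun p q => md A a p * md A b q - md A b q * md A a p) = 0 := by
  obtain ⟨N, h⟩ := A.locality a b
  refine ⟨N, ?_⟩
  funext p q
  ext c
  rw [dl_pow, LinearMap.sum_apply]
  exact h p q c

lemma goddard (d : ℤ → Module.End ℂ V)
    (hloc : ∀ c, ∃ N : ℕ, (dl (Module.End ℂ V) ^ N)
      (fun p q => d p * md A c q - md A c q * d p) = 0)
    (htr : ∀ n x, A.T (d n x) - d n (A.T x) = -((n : ℂ) • d (n - 1) x))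
    (hv : ∀ n, -1 ≤ n → d n A.vac = 0) (n : ℤ) : d n = 0 := by
  have hneg : ∀ k : ℕ, d (-1 - k) A.vac = 0 := by
    intro k
    induction k with
    | zero => exact hv _ (by simp)
    | succ k ih =>
      have := htr (-1 - k) A.vac
      rw [ih, A.T_vac, map_zero, map_zero, sub_zero, eq_comm, neg_eq_zero, smul_eq_zero] at this
      rcases this with h | h
      · exfalso
        have h' : (-1 - (k : ℤ)) = 0 := by exact_mod_cast h
        omega
      · rw [← h]; push_cast; congr 2; ring
  have hall : ∀ n, d n A.vac = 0 := by
    intro n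
    by_cases h : -1 ≤ n
    · exact hv n h
    · have := hneg (-1 - n).toNat
      rwa [show (-1 - ((-1 - n).toNat : ℤ)) = n by omega] at this
  ext c
  obtain ⟨N, hN⟩ := hloc c
  have h2 := dl_map (LinearMap.applyₗ (R := ℂ) A.vac) N
    (fun p q => d p * md A c q - md A c q * d p)
  rw [hN] at h2
  have h3 := congrFun (congrFun h2 (n - N)) (-1)
  rw [dl_edge] at h3
  · simpa [hall, md, A.create_self] using h3
  · intro p q hq
    simp [hall, md, A.creation q c hq]

lemma tr (n : ℤ) (a x : V) :
    A.T (md A a n x) - md A a n (A.T x) = -((n : ℂ) • md A a (n - 1) x) := by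
  rw [Int.cast_smul_eq_zsmul]; exact A.translation n a x

lemma md_T (a : V) (n : ℤ) : md A (A.T a) n = -((n : ℂ) • md A a (n - 1)) := by
  rw [← add_eq_zero_iff_eq_neg]
  refine goddard A (fun n => md A (A.T a) n + (n : ℂ) • md A a (n - 1)) ?_ ?_ ?_ n
  · intro c
    obtain ⟨N, hN⟩ := loc A (A.T a) c
    obtain ⟨M, hM⟩ := loc A a c
    have hM1 := dl_smul _ _ (dl_s1 M _ (-1) hM)
    refine ⟨max N (M + 1), ?_⟩
    have e := congrArg₂ (· + ·) (dl_mono (le_max_left N (M + 1)) hN)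
      (dl_mono (le_max_right N (M + 1)) hM1)
    simp only [← map_add, add_zero] at e
    rw [← e]
    congr 1
    funext p q
    simp only [Pi.add_apply, ← sub_eq_add_neg, add_mul, mul_add, smul_sub, smul_mul_assoc,
      mul_smul_comm]
    abel
  · intro n x
    have h1 := tr A n (A.T a) x
    have h2 := tr A (n - 1) a x
    simp only [LinearMap.add_apply, LinearMap.smul_apply, map_add, map_smul]
    rw [sub_eq_iff_eq_add] at h1 h2
    rw [h1, h2]
    push_cast
    module
  · intro n hn
    rcases hn.eq_or_lt with rfl | hn
    · have h := tr A (-1) a A.vac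
      have h1 : md A a (-1) A.vac = a := A.create_self a
      have h2 : md A (A.T a) (-1) A.vac = A.T a := A.create_self _
      rw [h1, A.T_vac, map_zero, sub_zero] at h
      simp only [LinearMap.add_apply, LinearMap.smul_apply]
      rw [h2, h]
      simp
    · have h2 : md A (A.T a) n A.vac = 0 := A.creation n _ (by omega)
      rcases (show 0 ≤ n by omega).eq_or_lt with rfl | hn'
      · simp [h2]
      · have h3 : md A a (n - 1) A.vac = 0 := A.creation _ _ (by omega)
        simp [h2, h3]

lemma comm0 (a b : V) (n : ℤ) :
    md A a 0 * md A b n - md A b n * md A a 0 = md A (md A a 0 b) n := by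
  rw [← sub_eq_zero]
  refine goddard A
    (fun n => md A a 0 * md A b n - md A b n * md A a 0 - md A (md A a 0 b) n) ?_ ?_ ?_ n
  · intro c
    obtain ⟨N, hN⟩ := loc A (md A a 0 b) c
    obtain ⟨N12, h12⟩ := loc A a b
    obtain ⟨N13, h13⟩ := loc A a c
    obtain ⟨N23, h23⟩ := loc A b c
    have hD := dong N12 N13 N23
      (fun m n k => (md A a m * md A b n - md A b n * md A a m) * md A c k
        - md A c k * (md A a m * md A b n - md A b n * md A a m))
      (fun m n k => md A a m * (md A b n * md A c k - md A c k * md A b n)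
        - (md A b n * md A c k - md A c k * md A b n) * md A a m)
      (fun m n k => md A b n * (md A a m * md A c k - md A c k * md A a m)
        - (md A a m * md A c k - md A c k * md A a m) * md A b n)
      (by funext m n k; simp only [Pi.sub_apply]; noncomm_ring)
      (by
        intro k
        have := dl_map (LinearMap.mulRight ℂ (md A c k) - LinearMap.mulLeft ℂ (md A c k)) N12
          (fun p q => md A a p * md A b q - md A b q * md A a p)
        rw [h12] at this
        refine this.trans ?_
        funext p q
        exact map_zero _)
      (by
        intro k
        have := dl_map (LinearMap.mulLeft ℂ (md A a k) - LinearMap.mulRight ℂ (md A a k)) N23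
          (fun p q => md A b p * md A c q - md A c q * md A b p)
        rw [h23] at this
        refine this.trans ?_
        funext p q
        exact map_zero _)
      (by
        intro k
        have := dl_map (LinearMap.mulLeft ℂ (md A b k) - LinearMap.mulRight ℂ (md A b k)) N13
          (fun p q => md A a p * md A c q - md A c q * md A a p)
        rw [h13] at this
        refine this.trans ?_
        funext p q
        exact map_zero _) 0
    refine ⟨max N (N23 + (N12 + N13)), ?_⟩
    have e := congrArg₂ (· - ·) (dl_mono (le_max_right N (N23 + (N12 + N13))) hD)
      (dl_mono (le_max_left N (N23 + (N12 + N13))) hN)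
    simp only [← map_sub, sub_zero] at e
    rw [← e]
    congr 1
    funext p q
    simp only [Pi.sub_apply]
    noncomm_ring
  · intro n x
    have h0 : ∀ y, A.T (md A a 0 y) = md A a 0 (A.T y) := by
      intro y
      have := tr A 0 a y
      simpa [sub_eq_zero] using this
    have h1 : ∀ y, _ := fun y => sub_eq_iff_eq_add.1 (tr A n b y)
    have h2 := sub_eq_iff_eq_add.1 (tr A n (md A a 0 b) x)
    simp only [LinearMap.sub_apply, Module.End.mul_apply, map_sub, h0, h1, h2, map_add, map_neg,
      map_smul]
    module
  · intro n hn
    have h0 : md A a 0 A.vac = 0 := A.creation 0 a le_rfl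
    rcases hn.eq_or_lt with rfl | hn
    · have h1 : ∀ x, md A x (-1) A.vac = x := A.create_self
      simp [h0, h1]
    · have h1 : ∀ x, md A x n A.vac = 0 := fun x => A.creation n x (by omega)
      simp [h0, h1]

lemma T_zero (a y : V) : A.T (md A a 0 y) = md A a 0 (A.T y) := by
  have := tr A 0 a y
  simpa [sub_eq_zero] using this

lemma mkQ_T (x : V) : (LinearMap.range A.T).mkQ (A.T x) = 0 := by
  simp

lemma skew_aux (a b : V) (r : ℕ) :
    (LinearMap.range A.T).mkQ (A.mul r b (A.mul (-1 - r) a A.vac)) =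
      (LinearMap.range A.T).mkQ (A.mul 0 b a) := by
  induction r with
  | zero => simp [A.create_self]
  | succ r ih =>
    have h1 := tr A (-1 - r) a A.vac
    have h2 := tr A (r + 1) b (md A a (-1 - r) A.vac)
    rw [A.T_vac, map_zero, sub_zero] at h1
    rw [h1] at h2
    have h3 := congrArg (LinearMap.range A.T).mkQ h2
    rw [map_sub, mkQ_T, zero_sub, map_neg, map_neg, map_neg, map_smul, map_smul, map_smul,
      add_sub_cancel_right] at h3
    change - -(_ • (LinearMap.range A.T).mkQ (A.mul _ b (A.mul _ a A.vac))) =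
      -(_ • (LinearMap.range A.T).mkQ (A.mul r b (A.mul (-1 - r) a A.vac))) at h3
    rw [ih] at h3
    have hne : ((r : ℂ) + 1) ≠ 0 := by exact_mod_cast Nat.succ_ne_zero r
    have e : (-1 - ((r + 1 : ℕ) : ℤ)) = -1 - r - 1 := by push_cast; ring
    rw [e]
    refine smul_right_injective _ hne ?_
    simp only
    push_cast at h3 ⊢
    refine Eq.trans ?_ ((congrArg Neg.neg h3).trans ?_) <;> module

lemma skew (a b : V) :
    (LinearMap.range A.T).mkQ (A.mul 0 a b) + (LinearMap.range A.T).mkQ (A.mul 0 b a) = 0 := by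
  obtain ⟨N, hN⟩ := A.locality a b
  rcases Nat.eq_zero_or_pos N with rfl | hpos
  · have h1 := hN 0 (-1) A.vac
    have h2 := hN (-1) 0 A.vac
    simp [A.create_self, A.creation] at h1 h2
    simp [h1, h2]
  · have h := congrArg (LinearMap.range A.T).mkQ (hN (-N) (-1) A.vac)
    rw [map_sum, map_zero, Finset.sum_range_succ'] at h
    have hz : ∑ r ∈ Finset.range (N + 1), ((-1 : ℂ) ^ r * (N.choose r : ℂ)) = 0 := by
      have := Int.alternating_sum_range_choose_of_ne hpos.ne'
      exact_mod_cast congrArg (Int.cast : ℤ → ℂ) this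
    rw [Finset.sum_range_succ'] at hz
    have ht : ∀ r ∈ Finset.range N, (LinearMap.range A.T).mkQ
        (((-1 : ℂ) ^ (r + 1) * (N.choose (r + 1) : ℂ)) •
        (A.mul (-N + N - (r + 1 : ℕ)) a (A.mul (-1 + (r + 1 : ℕ)) b A.vac) -
          A.mul (-1 + (r + 1 : ℕ)) b (A.mul (-N + N - (r + 1 : ℕ)) a A.vac))) =
        ((-1 : ℂ) ^ (r + 1) * (N.choose (r + 1) : ℂ)) •
          -(LinearMap.range A.T).mkQ (A.mul 0 b a) := by
      intro r _
      have e1 : (-1 + ((r + 1 : ℕ) : ℤ)) = r := by push_cast; ring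
      have e2 : (-(N : ℤ) + N - ((r + 1 : ℕ) : ℤ)) = -1 - r := by push_cast; ring
      rw [e1, e2, A.creation r b (by positivity), map_zero, zero_sub, map_smul, map_neg, skew_aux]
    rw [Finset.sum_congr rfl ht, ← Finset.sum_smul, eq_neg_of_add_eq_zero_left hz] at h
    simp [A.create_self, A.creation] at h
    rw [← h]; simp [add_comm]

end UVA

/-- the operation `(a,b) ↦ a(0)b` descends to the quotient `Q = V / L₋₁V`,
and the induced bracket makes `Q` a complex Lie algebra: it is bilinear (a linear map in
each variable), alternating, and satisfies the Jacobi identity (in Leibniz form). -/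
theorem quotient_lie_algebra {V : Type*} [AddCommGroup V] [Module ℂ V]
    (A : UniformVertexAlgebra V) :
    (∀ a a' b b' : V,
        (LinearMap.range A.T).mkQ a = (LinearMap.range A.T).mkQ a' →
        (LinearMap.range A.T).mkQ b = (LinearMap.range A.T).mkQ b' →
        (LinearMap.range A.T).mkQ (A.mul 0 a b) =
          (LinearMap.range A.T).mkQ (A.mul 0 a' b')) ∧
    ∃ bracket : (V ⧸ LinearMap.range A.T) →ₗ[ℂ]
        (V ⧸ LinearMap.range A.T) →ₗ[ℂ] (V ⧸ LinearMap.range A.T),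
      (∀ a b : V,
        bracket ((LinearMap.range A.T).mkQ a) ((LinearMap.range A.T).mkQ b) =
          (LinearMap.range A.T).mkQ (A.mul 0 a b)) ∧
      (∀ x, bracket x x = 0) ∧
      (∀ x y z, bracket x (bracket y z) =
        bracket (bracket x y) z + bracket y (bracket x z)) := by
  have hT : ∀ x, (LinearMap.range A.T).mkQ (A.T x) = 0 := UVA.mkQ_T A
  have hl : ∀ x b, A.mul 0 (A.T x) b = 0 := by
    intro x b
    have := congrArg (fun f => f b) (UVA.md_T A x 0)
    simpa [UVA.md] using this
  have hr : ∀ a y, A.mul 0 a (A.T y) = A.T (A.mul 0 a y) := fun a y => (UVA.T_zero A a y).symm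
  let φ : V →ₗ[ℂ] (V ⧸ LinearMap.range A.T) →ₗ[ℂ] (V ⧸ LinearMap.range A.T) :=
    { toFun := fun a => (LinearMap.range A.T).liftQ ((LinearMap.range A.T).mkQ ∘ₗ A.mul 0 a) (by
        rintro _ ⟨y, rfl⟩
        rw [LinearMap.mem_ker, LinearMap.comp_apply, hr, hT])
      map_add' := by
        intro a b
        ext x
        simp
      map_smul' := by
        intro a b
        ext x
        simp }
  let β := (LinearMap.range A.T).liftQ φ (by
    rintro _ ⟨y, rfl⟩
    rw [LinearMap.mem_ker]
    ext x
    simp [φ, hl])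
  have hβ : ∀ a b : V,
        β ((LinearMap.range A.T).mkQ a) ((LinearMap.range A.T).mkQ b) =
          (LinearMap.range A.T).mkQ (A.mul 0 a b) := fun a b => rfl
  refine ⟨?_, β, hβ, ?_, ?_⟩
  · intro a a' b b' h1 h2
    rw [← hβ, ← hβ, h1, h2]
  · intro x
    obtain ⟨a, rfl⟩ := Submodule.mkQ_surjective _ x
    rw [hβ]
    have := UVA.skew A a a
    rw [← two_smul ℂ, smul_eq_zero] at this
    exact this.resolve_left two_ne_zero
  · intro x y z
    obtain ⟨a, rfl⟩ := Submodule.mkQ_surjective _ x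
    obtain ⟨b, rfl⟩ := Submodule.mkQ_surjective _ y
    obtain ⟨c, rfl⟩ := Submodule.mkQ_surjective _ z
    simp only [hβ]
    rw [← map_add]
    congr 1
    have := congrArg (fun f => f c) (UVA.comm0 A a b 0)
    exact sub_eq_iff_eq_add.1 this
end
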